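/- arXiv:math/0611820 — 5 statements merged into one kernel-verified Lean document; each statement's English description precedes it below -/
import Mathlib

section
/- Let F be a number field with ring of integers O_F, let m be a positive integer, and let u ∈ O_F with u·O_F + m·O_F = O_F. Let t be a positive integer such that m divides t, t ≥ m + 4, and u^t ≡ 1 (mod m²·O_F). Then there exist elements c, d ∈ O_F such that m·(c·u^{t−1} + d·m^{t−1}) = 1 − u^t, c ∈ m·O_F, and d·O_F + m·O_F = O_F. -/
open NumberField

/-- Let `F` be a number field with ring of integers `𝓞 F`, let `m` be a positive
integer, and let `u ∈ 𝓞 F` with `u·𝓞_F + m·𝓞_F = 𝓞_F`. Let `t` be a positive integer such that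
`m ∣ t`, `t ≥ m + 4` and `u ^ t ≡ 1 (mod m² 𝓞_F)`. Then there exist `c, d ∈ 𝓞 F` such that
`m * (c * u ^ (t - 1) + d * m ^ (t - 1)) = 1 - u ^ t`, `c ∈ m 𝓞_F` and `d 𝓞_F + m 𝓞_F = 𝓞_F`. -/
theorem capitulation_stmt2
    (F : Type*) [Field F] [NumberField F]
    (m t : ℕ) (hm : 0 < m) (ht : 0 < t)
    (u : 𝓞 F) (hu : IsCoprime u (m : 𝓞 F))
    (hmt : m ∣ t) (ht4 : m + 4 ≤ t)
    (hut : u ^ t - 1 ∈ Ideal.span {((m : 𝓞 F)) ^ 2}) :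
    ∃ c d : 𝓞 F,
      (m : 𝓞 F) * (c * u ^ (t - 1) + d * (m : 𝓞 F) ^ (t - 1)) = 1 - u ^ t ∧
      c ∈ Ideal.span {(m : 𝓞 F)} ∧
      IsCoprime d (m : 𝓞 F) := by
  obtain ⟨v, hv⟩ := Ideal.mem_span_singleton'.mp hut
  obtain ⟨s, rfl⟩ : ∃ s, t = s + 2 := ⟨t - 2, by omega⟩
  have e1 : s + 2 - 1 = s + 1 := by omega
  rw [e1]
  obtain ⟨a, b, hab⟩ := (hu.pow (m := s + 1) (n := s + 1))
  refine ⟨(m : 𝓞 F) * (a * (-v - (m : 𝓞 F) ^ s)), 1 + (m : 𝓞 F) * (b * (-v - (m : 𝓞 F) ^ s)),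
    ?_, ?_, ?_⟩
  · linear_combination ((m : 𝓞 F) ^ 2 * (-v - (m : 𝓞 F) ^ s)) * hab - hv
  · exact Ideal.mem_span_singleton.mpr (dvd_mul_right _ _)
  · exact ⟨1, -(b * (-v - (m : 𝓞 F) ^ s)), by ring⟩
end

section
/- Let F be a number field with ring of integers O_F, let m and t be positive integers with t ≥ m + 4, and let u, c, d ∈ O_F satisfy m·(c·u^{t−1} + d·m^{t−1}) = 1 − u^t. Let f(X) = X^t + c·X^{t−1} − m·X^{m+2} + u·X^{m+1} + d ∈ O_F[X]. Let L be a finite field extension of F containing a root θ of f, with ring of integers O_L. Then θ ∈ O_L, the element ε = u − m·θ is a unit of O_L, and ε ≡ u (mod m·O_L). -/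
open NumberField Polynomial

/-- with `f(X) = X^t + c X^(t-1) - m X^(m+2) + u X^(m+1) + d ∈ (𝓞 F)[X]` satisfying
`m * (c u^(t-1) + d m^(t-1)) = 1 - u^t`, if `L/F` is a finite extension containing a root `θ`
of `f`, then `θ ∈ 𝓞 L`, the element `ε = u - m θ` is a unit of `𝓞 L`, and
`ε ≡ u (mod m 𝓞 L)`. -/
theorem capitulation_stmt4
    (F : Type*) [Field F] [NumberField F]
    (m t : ℕ) (hm : 0 < m) (ht : 0 < t) (ht4 : m + 4 ≤ t)
    (u c d : 𝓞 F)
    (heq : (m : 𝓞 F) * (c * u ^ (t - 1) + d * (m : 𝓞 F) ^ (t - 1)) = 1 - u ^ t)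
    (L : Type*) [Field L] [Algebra F L] [FiniteDimensional F L]
    (θ : L)
    (hθ : Polynomial.aeval θ
        ((X ^ t + C c * X ^ (t - 1) - C (m : 𝓞 F) * X ^ (m + 2) + C u * X ^ (m + 1) + C d :
            (𝓞 F)[X]).map (algebraMap (𝓞 F) F)) = 0) :
    (∃ θ' : 𝓞 L, (θ' : L) = θ) ∧
    ∃ ε : (𝓞 L)ˣ,
      ((ε : 𝓞 L) : L) = algebraMap F L (algebraMap (𝓞 F) F u) - (m : L) * θ ∧
      (ε : 𝓞 L) - algebraMap (𝓞 F) (𝓞 L) u ∈ Ideal.span {(m : 𝓞 L)} := by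
  obtain ⟨k, rfl⟩ : ∃ k, t = k + 1 := ⟨t - 1, by omega⟩
  simp only [Nat.add_sub_cancel] at heq hθ
  have hint : IsIntegral (𝓞 F) θ := by
    refine ⟨X ^ (k+1) + C c * X ^ k - C (m : 𝓞 F) * X ^ (m + 2) + C u * X ^ (m + 1) + C d,
      ?_, ?_⟩
    · have h : (X ^ (k+1) + C c * X ^ k - C (m : 𝓞 F) * X ^ (m + 2) + C u * X ^ (m + 1) + C d :
          (𝓞 F)[X]) = X ^ (k+1) + (C c * X ^ k - C (m : 𝓞 F) * X ^ (m + 2)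
            + C u * X ^ (m + 1) + C d) := by ring
      rw [h]
      apply monic_X_pow_add
      have hk : ∀ (a : 𝓞 F) (j : ℕ), j < k + 1 → (C a * X ^ j).degree < ((k + 1 : ℕ) : WithBot ℕ) :=
        fun a j hj => (degree_C_mul_X_pow_le j a).trans_lt (by exact_mod_cast hj)
      have h0 : (C d).degree < ((k + 1 : ℕ) : WithBot ℕ) := by
        simpa using hk d 0 (by omega)
      refine (degree_add_le _ _).trans_lt (max_lt ((degree_add_le _ _).trans_lt
        (max_lt ((degree_sub_le _ _).trans_lt (max_lt ?_ ?_)) ?_)) h0)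
      · exact hk _ _ (by omega)
      · exact hk _ _ (by omega)
      · exact hk _ _ (by omega)
    · rw [aeval_map_algebraMap] at hθ
      exact hθ
  have hintZ : IsIntegral ℤ θ := isIntegral_trans (R := ℤ) (A := 𝓞 F) θ hint
  obtain ⟨θ', rfl⟩ : ∃ θ' : 𝓞 L, (θ' : L) = θ := ⟨⟨θ, hintZ⟩, rfl⟩
  refine ⟨⟨θ', rfl⟩, ?_⟩
  have hroot : θ' ^ (k+1) + algebraMap (𝓞 F) (𝓞 L) c * θ' ^ k - (m : 𝓞 L) * θ' ^ (m+2)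
      + algebraMap (𝓞 F) (𝓞 L) u * θ' ^ (m+1) + algebraMap (𝓞 F) (𝓞 L) d = 0 := by
    apply RingOfIntegers.coe_injective
    rw [aeval_map_algebraMap] at hθ
    simp only [map_add, map_sub, map_mul, map_pow, aeval_X, aeval_C, map_natCast] at hθ
    simp only [map_add, map_sub, map_mul, map_pow, map_natCast, map_zero]
    exact hθ
  have heq' := congrArg (algebraMap (𝓞 F) (𝓞 L)) heq
  simp only [map_add, map_sub, map_mul, map_pow, map_natCast, map_one] at heq'
  have hcoe : ((algebraMap (𝓞 F) (𝓞 L) u : 𝓞 L) : L)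
      = algebraMap F L (algebraMap (𝓞 F) F u) := rfl
  rw [← hcoe]
  generalize algebraMap (𝓞 F) (𝓞 L) u = U at *
  generalize algebraMap (𝓞 F) (𝓞 L) c = c' at *
  generalize algebraMap (𝓞 F) (𝓞 L) d = d' at *
  obtain ⟨A, hA⟩ := sub_dvd_pow_sub_pow U ((m : 𝓞 L) * θ') (k+1)
  obtain ⟨B, hB⟩ := sub_dvd_pow_sub_pow U ((m : 𝓞 L) * θ') k
  have hu : IsUnit (U - (m : 𝓞 L) * θ') := by
    apply IsUnit.of_mul_eq_one (A + m * c' * B - (m : 𝓞 L) ^ (k+1) * θ' ^ (m+1))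
    rw [mul_pow] at hA hB
    linear_combination -hA - (m : 𝓞 L) * c' * hB + heq' + (m : 𝓞 L) ^ (k+1) * (-hroot)
  obtain ⟨ε, hε⟩ := hu
  refine ⟨ε, ?_, ?_⟩
  · rw [hε]; simp
  · rw [hε, Ideal.mem_span_singleton]
    exact ⟨-θ', by ring⟩
end

section
/- Let F be a number field with ring of integers O_F and let H be a finite field extension of F, with ring of integers O_H, such that every nonzero ideal a of O_F becomes principal in O_H (i.e. the ideal a·O_H of O_H is principal). Let M be a finitely generated projective O_F-module of constant rank r. Then M ⊗_{O_F} O_H is a free O_H-module of rank r. -/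
open NumberField
open scoped TensorProduct

/-- A principal ideal of a domain is a free module. -/
theorem free_of_isPrincipal_ideal {B : Type*} [CommRing B] [IsDomain B] (J : Ideal B)
    (hJ : J.IsPrincipal) : Module.Free B J := by
  obtain ⟨x, rfl⟩ := hJ
  by_cases hx : x = 0
  · subst hx
    have : Subsingleton (Submodule.span B {(0 : B)}) := by
      rw [Submodule.span_zero_singleton]; infer_instance
    exact Module.Free.of_subsingleton B _
  · exact Module.Free.of_equiv (LinearEquiv.toSpanNonzeroSingleton B B x hx)

/-- If `I` becomes principal in a flat domain `B`, then `B ⊗ I` is free. -/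
theorem free_tensor_ideal {A B : Type*} [CommRing A] [CommRing B] [IsDomain B] [Algebra A B]
    [Module.Flat A B] (I : Ideal A) (hI : (I.map (algebraMap A B)).IsPrincipal) :
    Module.Free B (B ⊗[A] I) := by
  let φ : B ⊗[A] I →ₗ[B] B :=
    (TensorProduct.AlgebraTensorModule.rid A B B).toLinearMap ∘ₗ
      (Submodule.subtype I).baseChange B
  have hinj : Function.Injective φ := by
    have h : Function.Injective ((Submodule.subtype I).lTensor B) :=
      Module.Flat.lTensor_preserves_injective_linearMap _ (Submodule.subtype_injective I)
    exact (TensorProduct.AlgebraTensorModule.rid A B B).injective.comp h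
  have hφ : ∀ (b : B) (i : I), φ (b ⊗ₜ i) = (i : A) • b := fun b i => by simp [φ]
  have hr : LinearMap.range φ = I.map (algebraMap A B) := by
    apply le_antisymm
    · rintro _ ⟨t, rfl⟩
      induction t with
      | zero => simp
      | add x y hx hy => rw [map_add]; exact add_mem hx hy
      | tmul b i =>
        rw [hφ, Algebra.smul_def]
        exact Ideal.mul_mem_right _ _ (Ideal.mem_map_of_mem _ i.2)
    · refine Ideal.map_le_iff_le_comap.2 fun i hi => ?_
      exact ⟨1 ⊗ₜ ⟨i, hi⟩, by rw [hφ]; simp [Algebra.smul_def]⟩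
  have : Module.Free B (LinearMap.range φ) := by
    rw [hr]; exact free_of_isPrincipal_ideal _ hI
  exact Module.Free.of_equiv (LinearEquiv.ofInjective φ hinj).symm

/-- Finite submodules of `A ^ n` become free over `B` when ideals of `A` become principal. -/
theorem free_tensor_of_injective {A B : Type*} [CommRing A] [IsDedekindDomain A]
    [CommRing B] [IsDomain B] [Algebra A B] [Module.Flat A B]
    (hcap : ∀ a : Ideal A, (a.map (algebraMap A B)).IsPrincipal) (n : ℕ) :
    ∀ (M : Type _) [AddCommGroup M] [Module A M] (f : M →ₗ[A] (Fin n → A)),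
      Function.Injective f → Module.Free B (B ⊗[A] M) := by
  induction n with
  | zero =>
    intro M _ _ f hf
    have : Subsingleton M := hf.subsingleton
    exact Module.Free.of_subsingleton B _
  | succ n ih =>
    intro M _ _ f hf
    let g : M →ₗ[A] A := LinearMap.proj 0 ∘ₗ f
    let I : Ideal A := LinearMap.range g
    have hfp : Module.FinitePresentation A I := Module.finitePresentation_of_finite A I
    have hproj : Module.Projective A I := Module.Flat.projective_of_finitePresentation
    obtain ⟨s, hs⟩ := Module.projective_lifting_property g.rangeRestrict LinearMap.id
      g.surjective_rangeRestrict
    have hker : Module.Free B (B ⊗[A] LinearMap.ker g) := by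
      refine ih _ ((LinearMap.funLeft A A Fin.succ) ∘ₗ f ∘ₗ (LinearMap.ker g).subtype) ?_
      rw [← LinearMap.ker_eq_bot, LinearMap.ker_eq_bot']
      rintro ⟨m, hm⟩ h
      have : f m = 0 := by
        funext i
        refine Fin.cases ?_ (fun j => ?_) i
        · exact hm
        · exact congrFun h j
      ext
      exact hf (by simpa using this)
    have hI : Module.Free B (B ⊗[A] I) := free_tensor_ideal I (hcap I)
    have hs' : ∀ x, g.rangeRestrict (s x) = x := fun x => LinearMap.congr_fun hs x
    have hsg : ∀ x : I, g (s x) = x := fun x => congrArg Subtype.val (hs' x)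
    let e0 : (LinearMap.ker g × I) →ₗ[A] M := LinearMap.coprod (LinearMap.ker g).subtype s
    have he : Function.Bijective e0 := by
      constructor
      · rw [← LinearMap.ker_eq_bot, LinearMap.ker_eq_bot']
        rintro ⟨⟨k, hk⟩, i⟩ h
        have h1 : k + s i = 0 := h
        have h2 : g k + g (s i) = 0 := by rw [← map_add, h1, map_zero]
        rw [LinearMap.mem_ker.1 hk, hsg, zero_add] at h2
        have h3 : i = 0 := Subtype.ext h2
        subst h3
        have h4 : k = 0 := by simpa using h1
        subst h4
        rfl
      · intro m
        refine ⟨(⟨m - s (g.rangeRestrict m), ?_⟩, g.rangeRestrict m), ?_⟩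
        · rw [LinearMap.mem_ker, map_sub, hsg]; simp
        · simp [e0]
    let e := LinearEquiv.ofBijective e0 he
    exact Module.Free.of_equiv
      ((TensorProduct.prodRight A B B (LinearMap.ker g) I).symm ≪≫ₗ e.baseChange A B _ _)

/-- Let `F` be a number field and `H/F` a finite extension in which every nonzero
ideal of `𝓞 F` becomes principal. If `M` is a finitely generated projective `𝓞 F`-module of
constant rank `r` (its localization at every prime is free of rank `r`), then
`M ⊗[𝓞 F] 𝓞 H` is a free `𝓞 H`-module of rank `r`. -/
theorem capitulation_stmt7
    (F H : Type*) [Field F] [NumberField F] [Field H] [NumberField H]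
    [Algebra F H] [FiniteDimensional F H]
    (hcap : ∀ a : Ideal (𝓞 F), a ≠ ⊥ →
      (a.map (algebraMap (𝓞 F) (𝓞 H))).IsPrincipal)
    (M : Type*) [AddCommGroup M] [Module (𝓞 F) M]
    [Module.Finite (𝓞 F) M] [Module.Projective (𝓞 F) M]
    (r : ℕ)
    (hrank : ∀ (p : Ideal (𝓞 F)) [p.IsPrime],
      Nonempty ((LocalizedModule p.primeCompl M) ≃ₗ[Localization.AtPrime p]
        (Fin r → Localization.AtPrime p))) :
    Nonempty ((𝓞 H ⊗[𝓞 F] M) ≃ₗ[𝓞 H] (Fin r → 𝓞 H)) := by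
  have : Module.Flat (𝓞 F) (𝓞 H) := inferInstance
  have hcap' : ∀ a : Ideal (𝓞 F), (a.map (algebraMap (𝓞 F) (𝓞 H))).IsPrincipal := by
    intro a
    by_cases ha : a = ⊥
    · subst ha
      rw [Ideal.map_bot]
      infer_instance
    · exact hcap a ha
  obtain ⟨n, f, g, -, hg, -⟩ := Module.Finite.exists_comp_eq_id_of_projective (𝓞 F) M
  have hfree : Module.Free (𝓞 H) (𝓞 H ⊗[𝓞 F] M) :=
    free_tensor_of_injective hcap' n M g hg
  let p : PrimeSpectrum (𝓞 H) := ⟨⊥, inferInstance⟩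
  have h1 := Module.rankAtStalk_baseChange (R := 𝓞 F) (M := M) p
  rw [Module.rankAtStalk_eq_finrank_of_free] at h1
  obtain ⟨e⟩ := hrank (p.comap (algebraMap (𝓞 F) (𝓞 H))).asIdeal
  have h2 : Module.finrank (𝓞 H) (𝓞 H ⊗[𝓞 F] M) = r := by
    refine h1.trans ?_
    rw [Module.rankAtStalk, e.finrank_eq]
    exact Module.finrank_fin_fun _
  exact ⟨(Module.finBasisOfFinrankEq (𝓞 H) (𝓞 H ⊗[𝓞 F] M) h2).equivFun⟩
end

section
/- Let R be a commutative ring, let A be an R-algebra, let S be a commutative R-algebra that is free of rank k as an R-module, and let N be an A-module. Suppose there exist natural numbers n and m such that (A ⊗_R S)^n ⊕ (N ⊗_R S) is isomorphic to (A ⊗_R S)^{n+m} as modules over A ⊗_R S. Then A^{nk} ⊕ N^{⊕ k} is isomorphic to A^{(n+m)k} as A-modules. -/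
open scoped TensorProduct

section BaseChange

variable {R S A N : Type*} [CommRing R] [CommRing S] [Algebra R S]
  [Ring A] [Algebra R A]
  [AddCommGroup N] [Module R N] [Module A N] [IsScalarTower R A N]

/-- The action of the `R`-algebra `A` on the base change `S ⊗[R] N` of an `A`-module `N`
along `R → S`, acting through the factor `N`, as an algebra homomorphism into the
`S`-linear endomorphisms. -/
noncomputable def baseChangeActionHom : A →ₐ[R] Module.End S (S ⊗[R] N) :=
  (Module.End.baseChangeHom R S N).comp (Algebra.lsmul R R N)

/-- The `A`-module structure on the base change `S ⊗[R] N` (with `A` acting through `N`). -/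
@[local instance 10] noncomputable def baseChangeModuleAux : Module A (S ⊗[R] N) :=
  Module.compHom _ (baseChangeActionHom (R := R) (S := S) (A := A) (N := N)).toRingHom

lemma baseChange_smul_def (a : A) (x : S ⊗[R] N) :
    a • x = baseChangeActionHom (R := R) (S := S) (A := A) (N := N) a x := rfl

lemma bc_smulCommClass : SMulCommClass A S (S ⊗[R] N) where
  smul_comm a s x := by
    rw [baseChange_smul_def, baseChange_smul_def]
    exact (baseChangeActionHom (R := R) (S := S) (A := A) (N := N) a).map_smul s x

lemma bc_isScalarTower : IsScalarTower R A (S ⊗[R] N) where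
  smul_assoc r a x := by
    rw [baseChange_smul_def, baseChange_smul_def, map_smul, LinearMap.smul_apply]

/-- The canonical `A ⊗[R] S`-module structure on the base change `S ⊗[R] N` of an
`A`-module `N` along `R → S`: the factor `A` acts through `N` and `S` acts through `S`. -/
@[local instance] noncomputable def baseChangeModule : Module (A ⊗[R] S) (S ⊗[R] N) := by
  letI i1 : IsScalarTower R S (S ⊗[R] N) := TensorProduct.isScalarTower_left
  letI i2 : SMulCommClass A S (S ⊗[R] N) := bc_smulCommClass
  letI i3 : IsScalarTower R A (S ⊗[R] N) := bc_isScalarTower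
  exact @TensorProduct.Algebra.module R A S (S ⊗[R] N) _ _ TensorProduct.leftModule _ _
    (baseChangeModuleAux) TensorProduct.leftModule _ _ i3 i1 i2

lemma bc_tmul_smul_tmul (a : A) (s : S) (x : N) :
    ((a ⊗ₜ[R] (1 : S)) : A ⊗[R] S) • (s ⊗ₜ[R] x : S ⊗[R] N) = s ⊗ₜ[R] (a • x) := by
  change a • ((1 : S) • (s ⊗ₜ[R] x : S ⊗[R] N)) = _
  rw [one_smul, baseChange_smul_def]
  rfl

/-- coordinates on the base change -/
noncomputable def bcCoord {k : ℕ} (b : S ≃ₗ[R] (Fin k → R)) : (S ⊗[R] N) ≃ₗ[R] (Fin k → N) :=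
  (TensorProduct.congr b (LinearEquiv.refl R N)) ≪≫ₗ
    (TensorProduct.comm R (Fin k → R) N) ≪≫ₗ (TensorProduct.piScalarRight R R N (Fin k))

lemma bcCoord_tmul {k : ℕ} (b : S ≃ₗ[R] (Fin k → R)) (s : S) (x : N) (i : Fin k) :
    bcCoord b (s ⊗ₜ[R] x) i = b s i • x := by
  simp [bcCoord]

lemma bcCoord_smul {k : ℕ} (b : S ≃ₗ[R] (Fin k → R)) (a : A) (x : S ⊗[R] N) :
    bcCoord b (((a ⊗ₜ[R] (1 : S)) : A ⊗[R] S) • x) = a • bcCoord b x := by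
  induction x using TensorProduct.induction_on with
  | zero => rw [smul_zero, map_zero, smul_zero]
  | add x y hx hy => rw [smul_add, map_add, hx, hy, map_add, smul_add]
  | tmul s x =>
    rw [bc_tmul_smul_tmul]
    ext i
    rw [Pi.smul_apply, bcCoord_tmul, bcCoord_tmul, smul_algebra_smul_comm]

/-- coordinates on the extended algebra -/
noncomputable def algCoord {k : ℕ} (b : S ≃ₗ[R] (Fin k → R)) : (A ⊗[R] S) ≃ₗ[R] (Fin k → A) :=
  (TensorProduct.congr (LinearEquiv.refl R A) b) ≪≫ₗ (TensorProduct.piScalarRight R R A (Fin k))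

lemma algCoord_tmul {k : ℕ} (b : S ≃ₗ[R] (Fin k → R)) (s : S) (x : A) (i : Fin k) :
    algCoord b (x ⊗ₜ[R] s) i = b s i • x := by
  simp [algCoord]

lemma algCoord_smul {k : ℕ} (b : S ≃ₗ[R] (Fin k → R)) (a : A) (x : A ⊗[R] S) :
    algCoord b (((a ⊗ₜ[R] (1 : S)) : A ⊗[R] S) • x) = a • algCoord b x := by
  induction x using TensorProduct.induction_on with
  | zero => rw [smul_zero, map_zero, smul_zero]
  | add x y hx hy => rw [smul_add, map_add, hx, hy, map_add, smul_add]
  | tmul x s =>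
    rw [smul_eq_mul, Algebra.TensorProduct.tmul_mul_tmul, one_mul]
    ext i
    rw [Pi.smul_apply, algCoord_tmul, algCoord_tmul, smul_eq_mul, mul_smul_comm]

/-- coordinates on a free module over the extended algebra -/
noncomputable def powCoord {k : ℕ} (b : S ≃ₗ[R] (Fin k → R)) (n : ℕ) :
    (Fin n → (A ⊗[R] S)) ≃+ (Fin (n * k) → A) where
  toFun v p := algCoord b (v (finProdFinEquiv.symm p).1) (finProdFinEquiv.symm p).2
  invFun w i := (algCoord b).symm (fun j => w (finProdFinEquiv (i, j)))
  left_inv v := by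
    ext i
    simp only [Equiv.symm_apply_apply]
    exact (algCoord b).symm_apply_apply _
  right_inv w := by
    ext p
    simp only [LinearEquiv.apply_symm_apply, Prod.mk.eta, Equiv.apply_symm_apply]
  map_add' v w := by
    ext p
    simp only [Pi.add_apply, map_add]

lemma powCoord_smul {k : ℕ} (b : S ≃ₗ[R] (Fin k → R)) (n : ℕ) (a : A)
    (v : Fin n → (A ⊗[R] S)) :
    powCoord b n (((a ⊗ₜ[R] (1 : S)) : A ⊗[R] S) • v) = a • powCoord b n v := by
  ext p
  change algCoord b (((a ⊗ₜ[R] (1 : S)) : A ⊗[R] S) • v _) _ = a • algCoord b (v _) _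
  rw [algCoord_smul, Pi.smul_apply]

/-- let `R` be a commutative ring, `A` an `R`-algebra, `S` a commutative
`R`-algebra which is free of rank `k` as an `R`-module, and `N` an `A`-module. If
`(A ⊗[R] S)^n ⊕ (N ⊗[R] S) ≅ (A ⊗[R] S)^(n+m)` as `A ⊗[R] S`-modules (here the base change
of `N` is written `S ⊗[R] N`), then `A^(n*k) ⊕ N^(⊕ k) ≅ A^((n+m)*k)` as `A`-modules. -/
theorem capitulation_stmt10
    (k n m : ℕ)
    (hS : Nonempty (S ≃ₗ[R] (Fin k → R)))
    (h : Nonempty (((Fin n → (A ⊗[R] S)) × (S ⊗[R] N)) ≃ₗ[A ⊗[R] S]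
      (Fin (n + m) → (A ⊗[R] S)))) :
    Nonempty (((Fin (n * k) → A) × (Fin k → N)) ≃ₗ[A] (Fin ((n + m) * k) → A)) := by
  obtain ⟨b⟩ := hS
  obtain ⟨e⟩ := h
  let c : ((Fin n → (A ⊗[R] S)) × (S ⊗[R] N)) ≃+ ((Fin (n * k) → A) × (Fin k → N)) :=
    AddEquiv.prodCongr (powCoord b n) (bcCoord b).toAddEquiv
  have hc : ∀ (a : A) x, c (((a ⊗ₜ[R] (1 : S)) : A ⊗[R] S) • x) = a • c x := fun a x =>
    Prod.ext (powCoord_smul b n a x.1) (bcCoord_smul b a x.2)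
  let f := (c.symm.trans e.toAddEquiv).trans (powCoord b (n + m))
  refine ⟨f.toLinearEquiv ?_⟩
  intro a y
  obtain ⟨x, rfl⟩ := c.surjective y
  have hf : ∀ x, f (c x) = powCoord b (n + m) (e x) := fun x =>
    congrArg (fun z => powCoord b (n + m) (e z)) (c.symm_apply_apply x)
  rw [← hc, hf, hf, map_smul, powCoord_smul]

end BaseChange
end

section
/- Let F be a number field with ring of integers O_F, let G be a finite group, and let A be an O_F-order with O_F[G] ⊆ A ⊆ F[G]. Let L be a finite field extension of F of degree k = [L:F] whose ring of integers O_L is free as an O_F-module (necessarily of rank k). Let N be a finitely generated locally free A-module such that N ⊗_{O_F} O_L is a stably free module over A ⊗_{O_F} O_L, i.e. there exist natural numbers n and m with (A ⊗_{O_F} O_L)^n ⊕ (N ⊗_{O_F} O_L) ≅ (A ⊗_{O_F} O_L)^{n+m} as A ⊗_{O_F} O_L-modules. Then A^{nk} ⊕ N^{⊕ k} ≅ A^{(n+m)k} as A-modules. -/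
open NumberField
open scoped TensorProduct

attribute [local instance 10] baseChangeModuleAux
attribute [local instance] baseChangeModule

section Helpers

variable {R S A N : Type*} [CommRing R] [CommRing S] [Algebra R S]
  [Ring A] [Algebra R A]
  [AddCommGroup N] [Module R N] [Module A N] [IsScalarTower R A N]

lemma bc_tmul_one_smul (a : A) (s : S) (x : N) :
    ((a ⊗ₜ[R] (1 : S)) • (s ⊗ₜ[R] x : S ⊗[R] N)) = s ⊗ₜ[R] (a • x) := by
  letI i1 : IsScalarTower R S (S ⊗[R] N) := TensorProduct.isScalarTower_left
  letI i2 : SMulCommClass A S (S ⊗[R] N) := bc_smulCommClass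
  letI i3 : IsScalarTower R A (S ⊗[R] N) := bc_isScalarTower
  have h : ((a ⊗ₜ[R] (1 : S)) • (s ⊗ₜ[R] x : S ⊗[R] N))
      = a • ((1 : S) • (s ⊗ₜ[R] x : S ⊗[R] N)) :=
    TensorProduct.Algebra.smul_def a (1 : S) (s ⊗ₜ[R] x : S ⊗[R] N)
  rw [h, one_smul, baseChange_smul_def]
  rfl

/-- `M ⊗ S ≃ M^k` for `S` free of rank `k`. -/
noncomputable def freeTensorEquiv (M : Type*) [AddCommGroup M] [Module R M] {k : ℕ}
    (e : S ≃ₗ[R] (Fin k → R)) : M ⊗[R] S ≃ₗ[R] (Fin k → M) :=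
  (TensorProduct.congr (LinearEquiv.refl R M) e).trans
    (TensorProduct.piScalarRight R R M (Fin k))

lemma freeTensorEquiv_tmul (M : Type*) [AddCommGroup M] [Module R M] {k : ℕ}
    (e : S ≃ₗ[R] (Fin k → R)) (x : M) (s : S) (i : Fin k) :
    freeTensorEquiv M e (x ⊗ₜ s) i = e s i • x := by
  simp [freeTensorEquiv]

lemma freeTensorEquiv_mul {k : ℕ} (e : S ≃ₗ[R] (Fin k → R)) (a : A) (x : A ⊗[R] S) :
    freeTensorEquiv A e ((a ⊗ₜ[R] (1 : S)) * x) = a • freeTensorEquiv A e x := by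
  induction x with
  | zero => simp
  | add x y hx hy => rw [mul_add, map_add, hx, hy, map_add, smul_add]
  | tmul b s =>
    ext i
    simp [freeTensorEquiv_tmul]

lemma freeTensorEquiv_smul {k : ℕ} (e : S ≃ₗ[R] (Fin k → R)) (a : A) (x : S ⊗[R] N) :
    freeTensorEquiv N e (TensorProduct.comm R S N ((a ⊗ₜ[R] (1 : S)) • x))
      = a • freeTensorEquiv N e (TensorProduct.comm R S N x) := by
  induction x with
  | zero => simp
  | add x y hx hy => rw [smul_add, map_add, map_add, hx, hy, map_add, map_add, smul_add]
  | tmul s b =>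
    ext i
    rw [bc_tmul_one_smul]
    simp only [TensorProduct.comm_tmul, freeTensorEquiv_tmul, Pi.smul_apply]
    rw [← algebraMap_smul A (e s i) (a • b), ← algebraMap_smul A (e s i) b, smul_smul, smul_smul,
      Algebra.commutes]

/-- `(A ⊗ S)^n ≃ A^(n k)`, additively. -/
noncomputable def freePiEquiv {k : ℕ} (e : S ≃ₗ[R] (Fin k → R)) (n : ℕ) :
    (Fin n → A ⊗[R] S) ≃+ (Fin (n * k) → A) where
  toFun f j := freeTensorEquiv A e (f (finProdFinEquiv.symm j).1) (finProdFinEquiv.symm j).2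
  invFun g i := (freeTensorEquiv A e).symm (fun l => g (finProdFinEquiv (i, l)))
  left_inv f := by
    funext i
    simp only [Equiv.symm_apply_apply]
    exact (freeTensorEquiv A e).symm_apply_apply (f i)
  right_inv g := by
    funext j
    simp only [LinearEquiv.apply_symm_apply, Prod.mk.eta, Equiv.apply_symm_apply]
  map_add' f g := by
    funext j
    simp

lemma freePiEquiv_smul {k : ℕ} (e : S ≃ₗ[R] (Fin k → R)) (n : ℕ) (a : A)
    (f : Fin n → A ⊗[R] S) :
    freePiEquiv e n ((a ⊗ₜ[R] (1 : S)) • f) = a • freePiEquiv e n f := by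
  funext j
  exact congrFun (freeTensorEquiv_mul e a (f (finProdFinEquiv.symm j).1)) _

theorem restrict_stably_free {k : ℕ} (e : S ≃ₗ[R] (Fin k → R)) (n m : ℕ)
    (E : ((Fin n → (A ⊗[R] S)) × (S ⊗[R] N)) ≃ₗ[A ⊗[R] S] (Fin (n + m) → (A ⊗[R] S))) :
    Nonempty (((Fin (n * k) → A) × (Fin k → N)) ≃ₗ[A] (Fin ((n + m) * k) → A)) := by
  let P : ((Fin n → (A ⊗[R] S)) × (S ⊗[R] N)) ≃+ ((Fin (n * k) → A) × (Fin k → N)) :=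
    AddEquiv.prodCongr (freePiEquiv e n)
      ((TensorProduct.comm R S N).trans (freeTensorEquiv N e)).toAddEquiv
  have hP : ∀ (a : A) x, P ((a ⊗ₜ[R] (1 : S)) • x) = a • P x := fun a x =>
    Prod.ext (freePiEquiv_smul e n a x.1) (freeTensorEquiv_smul e a x.2)
  let T := (P.symm.trans E.toAddEquiv).trans (freePiEquiv e (n + m))
  refine ⟨{ T with map_smul' := ?_ }⟩
  intro a y
  obtain ⟨x, rfl⟩ := P.surjective y
  have h1 : ∀ z, T (P z) = freePiEquiv e (n + m) (E z) := fun z => by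
    simp [T]
  change T (a • P x) = a • T (P x)
  rw [← hP, h1, h1, map_smul, freePiEquiv_smul]

end Helpers

set_option maxHeartbeats 2000000 in
set_option synthInstance.maxHeartbeats 1000000 in
/-- Proposition `non-cap`, key step: let `F` be a number field, `G` a finite
group, and `A` an `𝓞 F`-order with `𝓞 F[G] ⊆ A ⊆ F[G]` (formalized as an `𝓞 F`-subalgebra
of the group algebra `F[G] = MonoidAlgebra F G` containing all group elements and finitely
generated over `𝓞 F`).  Let `L/F` be a finite extension of degree `k = [L : F]` whose ring
of integers is free (of rank `k`) as an `𝓞 F`-module.  Let `N` be a finitely generated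
locally free `A`-module such that the base change of `N` to `A ⊗[𝓞 F] 𝓞 L` is stably free:
`(A ⊗ 𝓞 L)^n ⊕ (N ⊗ 𝓞 L) ≅ (A ⊗ 𝓞 L)^(n+m)`.  Then `A^(n*k) ⊕ N^(⊕ k) ≅ A^((n+m)*k)`
as `A`-modules. -/
theorem capitulation_stmt11
    (F : Type*) [Field F] [NumberField F]
    (G : Type*) [Group G] [Finite G]
    (A : Subalgebra (𝓞 F) (MonoidAlgebra F G))
    (hGA : ∀ g : G, MonoidAlgebra.of F G g ∈ A)
    (hAfin : Module.Finite (𝓞 F) A)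
    (L : Type*) [Field L] [NumberField L] [Algebra F L] [FiniteDimensional F L]
    (hfree : Nonempty ((𝓞 L) ≃ₗ[𝓞 F] (Fin (Module.finrank F L) → 𝓞 F)))
    (N : Type*) [AddCommGroup N] [Module (𝓞 F) N] [Module A N] [IsScalarTower (𝓞 F) A N]
    [Module.Finite A N]
    (hlocfree : ∀ (p : Ideal (𝓞 F)) [p.IsPrime], p ≠ ⊥ →
      ∃ t : ℕ, Nonempty ((Localization.AtPrime p ⊗[𝓞 F] N)
        ≃ₗ[A ⊗[𝓞 F] Localization.AtPrime p]
        (Fin t → (A ⊗[𝓞 F] Localization.AtPrime p))))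
    (n m : ℕ)
    (hstablyfree : Nonempty (((Fin n → (A ⊗[𝓞 F] 𝓞 L)) × (𝓞 L ⊗[𝓞 F] N))
      ≃ₗ[A ⊗[𝓞 F] 𝓞 L] (Fin (n + m) → (A ⊗[𝓞 F] 𝓞 L)))) :
    Nonempty (((Fin (n * Module.finrank F L) → A) × (Fin (Module.finrank F L) → N))
      ≃ₗ[A] (Fin ((n + m) * Module.finrank F L) → A)) := by
  obtain ⟨e⟩ := hfree
  obtain ⟨E⟩ := hstablyfree
  exact restrict_stably_free e n m E
end
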